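/- arXiv:1705.08074 — 2 statements merged into one kernel-verified Lean document; each statement's English description precedes it below -/
import Mathlib

section
/- Assume a = 2, b ≥ 3 and t ≥ p = 2b. Let x* = (b − 1 − √((b−1)² − 1))/2 and y* = 2b − 1 + (4/b − 6)x* + (η − 9 + 10/b)x*². Then: (i) q_s(x*) ≤ y* for every block array s, with equality if and only if s ∈ Q₀ ∪ Q₁* ∪ Q₂*; and (ii) for every real x ≠ x*, max_{s∈S} q_s(x) > y*. -/
open Matrix

namespace TwoDim

/-- The set of plots of an `a × b` block. -/
abbrev Plot (a b : ℕ) := Fin a × Fin b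

/-- A block array: an assignment of one of `t` treatments to each plot. -/
abbrev BlockArray (a b t : ℕ) := Plot a b → Fin t

/-- The all-ones matrix. -/
def Jmat (n : Type*) : Matrix n n ℝ := Matrix.of fun _ _ => 1

/-- `B_m = I - J/m`. -/
noncomputable def Bmat (n : Type*) [Fintype n] [DecidableEq n] : Matrix n n ℝ :=
  1 - ((Fintype.card n : ℝ))⁻¹ • Jmat n

variable {a b t : ℕ}

/-- The treatment incidence matrix `T_s`. -/
def Tmat (s : BlockArray a b t) : Matrix (Plot a b) (Fin t) ℝ :=
  Matrix.of fun q k => if s q = k then 1 else 0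

/-- Two plots are neighbors if they agree in one coordinate and differ by 1 in the other. -/
def Neighbor (q r : Plot a b) : Prop :=
  (q.1 = r.1 ∧ (q.2.val + 1 = r.2.val ∨ r.2.val + 1 = q.2.val)) ∨
  (q.2 = r.2 ∧ (q.1.val + 1 = r.1.val ∨ r.1.val + 1 = q.1.val))

instance (q r : Plot a b) : Decidable (Neighbor q r) := by
  unfold Neighbor; infer_instance

/-- The adjacency matrix of the neighbor relation. -/
def Mmat (a b : ℕ) : Matrix (Plot a b) (Plot a b) ℝ :=
  Matrix.of fun q r => if Neighbor q r then 1 else 0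

/-- `F_s = M T_s`. -/
def Fmat (s : BlockArray a b t) : Matrix (Plot a b) (Fin t) ℝ :=
  Mmat a b * Tmat s

/-- `B̃ = Σ⁻¹ − Σ⁻¹ J Σ⁻¹ / (1'Σ⁻¹1)`. -/
noncomputable def Btilde (Sig : Matrix (Plot a b) (Plot a b) ℝ) :
    Matrix (Plot a b) (Plot a b) ℝ :=
  Sig⁻¹ - (∑ i, ∑ j, Sig⁻¹ i j)⁻¹ • (Sig⁻¹ * Jmat (Plot a b) * Sig⁻¹)

/-- `C_{s00} = T_s' W T_s` (with `W` playing the role of `B̃`). -/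
def Cs00 (W : Matrix (Plot a b) (Plot a b) ℝ) (s : BlockArray a b t) :
    Matrix (Fin t) (Fin t) ℝ := (Tmat s)ᵀ * W * Tmat s

/-- `C_{s01} = T_s' W F_s`. -/
def Cs01 (W : Matrix (Plot a b) (Plot a b) ℝ) (s : BlockArray a b t) :
    Matrix (Fin t) (Fin t) ℝ := (Tmat s)ᵀ * W * Fmat s

/-- `C_{s11} = F_s' W F_s`. -/
def Cs11 (W : Matrix (Plot a b) (Plot a b) ℝ) (s : BlockArray a b t) :
    Matrix (Fin t) (Fin t) ℝ := (Fmat s)ᵀ * W * Fmat s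

/-- `c_{s00} = tr(B_t C_{s00})`. -/
noncomputable def cs00 (W : Matrix (Plot a b) (Plot a b) ℝ) (s : BlockArray a b t) : ℝ :=
  Matrix.trace (Bmat (Fin t) * Cs00 W s)

noncomputable def cs01 (W : Matrix (Plot a b) (Plot a b) ℝ) (s : BlockArray a b t) : ℝ :=
  Matrix.trace (Bmat (Fin t) * Cs01 W s)

noncomputable def cs11 (W : Matrix (Plot a b) (Plot a b) ℝ) (s : BlockArray a b t) : ℝ :=
  Matrix.trace (Bmat (Fin t) * Cs11 W s)

/-- The quadratic `q_s(x) = c_{s00} + 2 c_{s01} x + c_{s11} x²`. -/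
noncomputable def qpoly (W : Matrix (Plot a b) (Plot a b) ℝ) (s : BlockArray a b t) (x : ℝ) : ℝ :=
  cs00 W s + 2 * cs01 W s * x + cs11 W s * x ^ 2

/-- A measure on the set of block arrays: nonnegative weights summing to one. -/
def IsMeasure (ξ : BlockArray a b t → ℝ) : Prop :=
  (∀ s, 0 ≤ ξ s) ∧ ∑ s, ξ s = 1

noncomputable def Cm00 (W : Matrix (Plot a b) (Plot a b) ℝ) (ξ : BlockArray a b t → ℝ) :
    Matrix (Fin t) (Fin t) ℝ := ∑ s, ξ s • Cs00 W s

noncomputable def Cm01 (W : Matrix (Plot a b) (Plot a b) ℝ) (ξ : BlockArray a b t → ℝ) :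
    Matrix (Fin t) (Fin t) ℝ := ∑ s, ξ s • Cs01 W s

noncomputable def Cm11 (W : Matrix (Plot a b) (Plot a b) ℝ) (ξ : BlockArray a b t → ℝ) :
    Matrix (Fin t) (Fin t) ℝ := ∑ s, ξ s • Cs11 W s

noncomputable def cm00 (W : Matrix (Plot a b) (Plot a b) ℝ) (ξ : BlockArray a b t → ℝ) : ℝ :=
  ∑ s, ξ s * cs00 W s

noncomputable def cm01 (W : Matrix (Plot a b) (Plot a b) ℝ) (ξ : BlockArray a b t → ℝ) : ℝ :=
  ∑ s, ξ s * cs01 W s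

noncomputable def cm11 (W : Matrix (Plot a b) (Plot a b) ℝ) (ξ : BlockArray a b t → ℝ) : ℝ :=
  ∑ s, ξ s * cs11 W s

/-- `q*_ξ = c_{ξ00} − c_{ξ01}²/c_{ξ11}`. -/
noncomputable def qstar (W : Matrix (Plot a b) (Plot a b) ℝ) (ξ : BlockArray a b t → ℝ) : ℝ :=
  cm00 W ξ - (cm01 W ξ) ^ 2 / cm11 W ξ

/-- `G` is a generalized inverse of `A`. -/
def IsGenInv (A G : Matrix (Fin t) (Fin t) ℝ) : Prop := A * G * A = A

/-- Information matrix `C_{ξ00} − C_{ξ01} G C_{ξ10}` computed with a generalized inverse `G`. -/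
noncomputable def InfoMat (W : Matrix (Plot a b) (Plot a b) ℝ) (ξ : BlockArray a b t → ℝ)
    (G : Matrix (Fin t) (Fin t) ℝ) : Matrix (Fin t) (Fin t) ℝ :=
  Cm00 W ξ - Cm01 W ξ * G * (Cm01 W ξ)ᵀ

/-- A criterion `Φ` on `t×t` real symmetric matrices: concave, Loewner-nondecreasing, and
invariant under simultaneous permutations of rows and columns. -/
def GoodPhi (t : ℕ) (Φ : Matrix (Fin t) (Fin t) ℝ → ℝ) : Prop :=
  (∀ A B : Matrix (Fin t) (Fin t) ℝ, A.IsSymm → B.IsSymm → ∀ α : ℝ, 0 ≤ α → α ≤ 1 →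
      α * Φ A + (1 - α) * Φ B ≤ Φ (α • A + (1 - α) • B)) ∧
  (∀ A B : Matrix (Fin t) (Fin t) ℝ, A.IsSymm → B.IsSymm → (B - A).PosSemidef → Φ A ≤ Φ B) ∧
  (∀ (σ : Equiv.Perm (Fin t)) (C : Matrix (Fin t) (Fin t) ℝ), Φ (C.submatrix σ σ) = Φ C)

/-- Universal optimality of a measure `ξ`. -/
def UnivOptimal (W : Matrix (Plot a b) (Plot a b) ℝ) (ξ : BlockArray a b t → ℝ) : Prop :=
  ∀ η : BlockArray a b t → ℝ, IsMeasure η →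
    ∀ G H : Matrix (Fin t) (Fin t) ℝ, IsGenInv (Cm11 W ξ) G → IsGenInv (Cm11 W η) H →
      ∀ Φ : Matrix (Fin t) (Fin t) ℝ → ℝ, GoodPhi t Φ →
        Φ (InfoMat W η H) ≤ Φ (InfoMat W ξ G)

/-- A measure is symmetric if it is invariant under relabeling of the treatments. -/
def IsSymmetricMeasure (ξ : BlockArray a b t → ℝ) : Prop :=
  ∀ (σ : Equiv.Perm (Fin t)) (s : BlockArray a b t), ξ (fun q => σ (s q)) = ξ s

/-- A matrix is completely symmetric if it is of the form `αI + βJ`. -/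
def ComplSym (A : Matrix (Fin t) (Fin t) ℝ) : Prop :=
  ∃ α β : ℝ, A = α • (1 : Matrix (Fin t) (Fin t) ℝ) + β • Jmat (Fin t)

/-- A measure is pseudo symmetric if `C_{ξ00}`, `C_{ξ01}`, `C_{ξ11}` are completely symmetric. -/
def PseudoSym (W : Matrix (Plot a b) (Plot a b) ℝ) (ξ : BlockArray a b t → ℝ) : Prop :=
  ComplSym (Cm00 W ξ) ∧ ComplSym (Cm01 W ξ) ∧ ComplSym (Cm11 W ξ)

/-- `r(x) = max_{s∈S} q_s(x)`. -/
noncomputable def rfun {a b : ℕ} (t : ℕ) (W : Matrix (Plot a b) (Plot a b) ℝ) (x : ℝ) : ℝ :=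
  sSup (Set.range fun s : BlockArray a b t => qpoly W s x)

/-- `min_{s∈S} q_s(x)`. -/
noncomputable def rmin {a b : ℕ} (t : ℕ) (W : Matrix (Plot a b) (Plot a b) ℝ) (x : ℝ) : ℝ :=
  sInf (Set.range fun s : BlockArray a b t => qpoly W s x)

/-- Number of plots assigned treatment `k` by `s`. -/
noncomputable def f0 (s : BlockArray a b t) (k : Fin t) : ℕ :=
  {q : Plot a b | s q = k}.ncard

/-- Replications of `k` among the columns `1,…,b−1`. -/
noncomputable def f1 (s : BlockArray a b t) (k : Fin t) : ℕ :=
  {q : Plot a b | s q = k ∧ q.2.val + 1 < b}.ncard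

/-- Replications of `k` among the columns `2,…,b`. -/
noncomputable def f2 (s : BlockArray a b t) (k : Fin t) : ℕ :=
  {q : Plot a b | s q = k ∧ 1 ≤ q.2.val}.ncard

/-- Replications of `k` among the rows `1,…,a−1`. -/
noncomputable def f3 (s : BlockArray a b t) (k : Fin t) : ℕ :=
  {q : Plot a b | s q = k ∧ q.1.val + 1 < a}.ncard

/-- Replications of `k` among the rows `2,…,a`. -/
noncomputable def f4 (s : BlockArray a b t) (k : Fin t) : ℕ :=
  {q : Plot a b | s q = k ∧ 1 ≤ q.1.val}.ncard

noncomputable def fc (s : BlockArray a b t) : ℕ → Fin t → ℕ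
  | 0 => f0 s
  | 1 => f1 s
  | 2 => f2 s
  | 3 => f3 s
  | 4 => f4 s
  | _ => fun _ => 0

/-- `h^{uv}_s = Σ_k f^u_{s,k} f^v_{s,k}`. -/
noncomputable def hval (s : BlockArray a b t) (u v : ℕ) : ℝ :=
  ∑ k : Fin t, (fc s u k : ℝ) * (fc s v k : ℝ)

noncomputable def h00 (s : BlockArray a b t) : ℝ := hval s 0 0

noncomputable def h1 (s : BlockArray a b t) : ℝ :=
  hval s 0 1 + hval s 0 2 + hval s 0 3 + hval s 0 4

noncomputable def h2 (s : BlockArray a b t) : ℝ :=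
  hval s 1 1 + hval s 2 2 + hval s 3 3 + hval s 4 4

noncomputable def h3 (s : BlockArray a b t) : ℝ :=
  hval s 1 2 + hval s 1 3 + hval s 1 4 + hval s 2 3 + hval s 2 4 + hval s 3 4

/-- `z¹_{s,r}`: horizontally adjacent pairs of plots receiving the same treatment. -/
noncomputable def zr1 (s : BlockArray a b t) : ℕ :=
  {qr : Plot a b × Plot a b |
    qr.1.1 = qr.2.1 ∧ qr.1.2.val + 1 = qr.2.2.val ∧ s qr.1 = s qr.2}.ncard

noncomputable def zr2 (s : BlockArray a b t) : ℕ :=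
  {qr : Plot a b × Plot a b |
    qr.1.1 = qr.2.1 ∧ qr.1.2.val + 2 = qr.2.2.val ∧ s qr.1 = s qr.2}.ncard

noncomputable def zc1 (s : BlockArray a b t) : ℕ :=
  {qr : Plot a b × Plot a b |
    qr.1.2 = qr.2.2 ∧ qr.1.1.val + 1 = qr.2.1.val ∧ s qr.1 = s qr.2}.ncard

noncomputable def zc2 (s : BlockArray a b t) : ℕ :=
  {qr : Plot a b × Plot a b |
    qr.1.2 = qr.2.2 ∧ qr.1.1.val + 2 = qr.2.1.val ∧ s qr.1 = s qr.2}.ncard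

/-- pairs `(i,j)`, `(i−1,j+1)` with the same treatment. -/
noncomputable def zd1 (s : BlockArray a b t) : ℕ :=
  {qr : Plot a b × Plot a b |
    qr.2.1.val + 1 = qr.1.1.val ∧ qr.1.2.val + 1 = qr.2.2.val ∧ s qr.1 = s qr.2}.ncard

/-- pairs `(i,j)`, `(i+1,j+1)` with the same treatment. -/
noncomputable def zd2 (s : BlockArray a b t) : ℕ :=
  {qr : Plot a b × Plot a b |
    qr.1.1.val + 1 = qr.2.1.val ∧ qr.1.2.val + 1 = qr.2.2.val ∧ s qr.1 = s qr.2}.ncard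

noncomputable def z1 (s : BlockArray a b t) : ℝ := 2 * zr1 s + 2 * zc1 s

noncomputable def z2 (s : BlockArray a b t) : ℝ :=
  2 * zr2 s + 2 * zc2 s + 4 * zd1 s + 4 * zd2 s

/-- `η = 4p − 2a − 2b − 2(8ab − 7a − 7b + 4)/t + 4(2p − a − b)²/(pt)` where `p = ab`. -/
noncomputable def eta (a b t : ℕ) : ℝ :=
  4 * ((a : ℝ) * b) - 2 * a - 2 * b - 2 * (8 * (a : ℝ) * b - 7 * a - 7 * b + 4) / t +
    4 * (2 * (a : ℝ) * b - a - b) ^ 2 / (((a : ℝ) * b) * t)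

/-- A corner plot of the `a × b` block. -/
def IsCorner (q : Plot a b) : Prop :=
  (q.1.val = 0 ∨ q.1.val + 1 = a) ∧ (q.2.val = 0 ∨ q.2.val + 1 = b)

/-- Treatment `k` is significant in `s`: it occupies exactly two plots, which are
neighbors, at least one of them being a corner plot. -/
def Significant (s : BlockArray a b t) (k : Fin t) : Prop :=
  ∃ u v : Plot a b, u ≠ v ∧ {q : Plot a b | s q = k} = {u, v} ∧
    Neighbor u v ∧ (IsCorner u ∨ IsCorner v)

/-- Treatment `k` is strictly significant in `s`: both of its two plots are corners. -/
def StrictSignificant (s : BlockArray a b t) (k : Fin t) : Prop :=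
  ∃ u v : Plot a b, u ≠ v ∧ {q : Plot a b | s q = k} = {u, v} ∧
    Neighbor u v ∧ IsCorner u ∧ IsCorner v

/-- `Q_i`: block arrays with exactly `i` significant treatments in which every other
treatment appears at most once. -/
def Qset (a b t : ℕ) (i : ℕ) : Set (BlockArray a b t) :=
  {s | {k : Fin t | Significant s k}.ncard = i ∧
       ∀ k : Fin t, ¬ Significant s k → f0 s k ≤ 1}

/-- `Q_j*`: members of `Q_j` whose significant treatments are all strictly significant. -/
def QsetStar (a b t : ℕ) (j : ℕ) : Set (BlockArray a b t) :=
  {s | s ∈ Qset a b t j ∧ ∀ k : Fin t, Significant s k → StrictSignificant s k}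

/-- Treatment `k` is connected in `s`. -/
def ConnectedIn (s : BlockArray a b t) (k : Fin t) : Prop :=
  ∀ q r : Plot a b, s q = k → s r = k →
    Relation.ReflTransGen (fun u v => Neighbor u v ∧ s u = k ∧ s v = k) q r

/-!
Writing `K = (1 + xM) B (1 + xM)`, one has `q_s(x) = tr (B_t T_s' K T_s)`, which is the value
common to all binary arrays plus the sum of the entries of `K` over the ordered pairs of distinct
plots that receive the same treatment. As the neighbor graph is triangle-free and all degrees in a
`2 × b` block are `2` (corners) or `3`, for `0 < x < 2/3` these entries are largest exactly at the
pairs of neighboring corners. The point `x*` is the smaller zero of that largest entry, so at `x*`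
repetitions never help, and they are harmless exactly when every repeated treatment fills an end
column.

For `x < x*` the binary value is decreasing, so a binary array beats `y*`; for `x > x*` an array
that repeats a treatment in each of the two end columns, and nothing else, does, because its value
agrees with `y*` at `x*` and is increasing.
-/

section Trace

variable {n : Type*} [Fintype n] [DecidableEq n]

lemma Jmat_eq_vecMulVec (n : Type*) : Jmat n = vecMulVec 1 1 := by
  ext i j
  simp [Jmat, vecMulVec_apply]

lemma isSymm_Bmat (n : Type*) [Fintype n] [DecidableEq n] : (Bmat n).IsSymm := by
  rw [IsSymm, Bmat, Jmat_eq_vecMulVec, transpose_sub, transpose_one, transpose_smul,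
    transpose_vecMulVec]

lemma trace_Bmat_mul (C : Matrix n n ℝ) :
    trace (Bmat n * C) = trace C - (Fintype.card n : ℝ)⁻¹ * (1 ⬝ᵥ C *ᵥ 1) := by
  rw [Bmat, Jmat_eq_vecMulVec, Matrix.sub_mul, Matrix.one_mul, Matrix.smul_mul, trace_sub,
    trace_smul, vecMulVec_mul, trace_vecMulVec, dotProduct_comm, ← dotProduct_mulVec, smul_eq_mul]

lemma dotProduct_Bmat_mulVec (v : n → ℝ) :
    v ⬝ᵥ Bmat n *ᵥ v = ∑ i, v i ^ 2 - (Fintype.card n : ℝ)⁻¹ * (∑ i, v i) ^ 2 := by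
  rw [Bmat, Jmat_eq_vecMulVec, sub_mulVec, smul_mulVec, one_mulVec, vecMulVec_mulVec,
    dotProduct_sub, dotProduct_smul]
  simp [dotProduct, ← Finset.sum_mul, ← sq]

end Trace

section BlockArray

lemma Tmat_mul_transpose_apply (s : BlockArray a b t) (u v : Plot a b) :
    (Tmat s * (Tmat s)ᵀ) u v = if s u = s v then 1 else 0 := by
  simp [Tmat, Matrix.mul_apply, eq_comm]

lemma Tmat_mulVec_one (s : BlockArray a b t) : Tmat s *ᵥ 1 = 1 := by
  ext u
  simp [Tmat, mulVec, dotProduct]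

lemma trace_transpose_Tmat_mul_mul (s : BlockArray a b t) (K : Matrix (Plot a b) (Plot a b) ℝ) :
    trace ((Tmat s)ᵀ * K * Tmat s) = ∑ z : Plot a b × Plot a b with s z.1 = s z.2, K z.1 z.2 := by
  rw [Matrix.mul_assoc, trace_mul_comm, Matrix.mul_assoc, Finset.sum_filter]
  simp only [trace, diag_apply, Matrix.mul_apply (M := K), Tmat_mul_transpose_apply, mul_ite,
    mul_one, mul_zero, eq_comm]
  exact (Fintype.sum_prod_type fun z : Plot a b × Plot a b =>
    if s z.1 = s z.2 then K z.1 z.2 else 0).symm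

lemma one_dotProduct_transpose_Tmat_mul_mul (s : BlockArray a b t)
    (K : Matrix (Plot a b) (Plot a b) ℝ) :
    1 ⬝ᵥ ((Tmat s)ᵀ * K * Tmat s) *ᵥ 1 = 1 ⬝ᵥ K *ᵥ 1 := by
  rw [← mulVec_mulVec, ← mulVec_mulVec, Tmat_mulVec_one, dotProduct_mulVec, vecMul_transpose,
    Tmat_mulVec_one]

lemma Tmat_add_smul_Fmat (s : BlockArray a b t) (x : ℝ) :
    Tmat s + x • Fmat s = (1 + x • Mmat a b) * Tmat s := by
  rw [Fmat, Matrix.add_mul, Matrix.one_mul, Matrix.smul_mul]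

lemma qpoly_eq_trace {W : Matrix (Plot a b) (Plot a b) ℝ} (hW : W.IsSymm) (s : BlockArray a b t)
    (x : ℝ) :
    qpoly W s x =
      trace (Bmat (Fin t) * ((Tmat s + x • Fmat s)ᵀ * W * (Tmat s + x • Fmat s))) := by
  have hcross : trace (Bmat (Fin t) * ((Fmat s)ᵀ * W * Tmat s)) = cs01 W s := by
    rw [← trace_transpose, transpose_mul, transpose_mul, transpose_mul, transpose_transpose,
      hW.eq, (isSymm_Bmat _).eq, trace_mul_comm, ← Matrix.mul_assoc (Tmat s)ᵀ]
    rfl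
  rw [transpose_add, transpose_smul]
  simp only [Matrix.add_mul, Matrix.mul_add, Matrix.smul_mul, Matrix.mul_smul, trace_add,
    trace_smul, smul_eq_mul, hcross]
  rw [qpoly, cs00, cs01, cs11, Cs00, Cs01, Cs11]
  ring

end BlockArray

section Graph

variable {V : Type*} [Fintype V] {G : SimpleGraph V} [DecidableRel G.Adj]

lemma adjMatrix_mul_self_apply_le_degree {R : Type*} [Semiring R] [PartialOrder R]
    [IsOrderedRing R] (u v : V) : (G.adjMatrix R * G.adjMatrix R) u v ≤ G.degree u := by
  rw [SimpleGraph.adjMatrix_mul_apply, ← SimpleGraph.card_neighborFinset_eq_degree,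
    Finset.cast_card]
  refine Finset.sum_le_sum fun w _ => ?_
  rw [SimpleGraph.adjMatrix_apply]
  split_ifs <;> norm_num

lemma adjMatrix_mul_self_apply_eq_zero {R : Type*} [NonAssocSemiring R] (hG : G.CliqueFree 3)
    {u v : V} (huv : G.Adj u v) : (G.adjMatrix R * G.adjMatrix R) u v = 0 := by
  rw [SimpleGraph.adjMatrix_mul_apply]
  refine Finset.sum_eq_zero fun w hw => ?_
  rw [SimpleGraph.adjMatrix_apply, if_neg]
  intro hwv
  classical
  exact hG {u, w, v} <| SimpleGraph.is3Clique_triple_iff.2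
    ⟨(G.mem_neighborFinset u w).1 hw, huv, hwv⟩

variable [DecidableEq V] (G)

/-- The symmetric matrix `K = (1 + xA) B (1 + xA)`, with `A` the adjacency matrix of `G`. For the
neighbor graph of a block, `q_s(x)` is the trace of `B_t T_s' K T_s`, so it depends on `s` only
through the sum of `K` over the pairs of plots with equal treatment. -/
noncomputable def interferenceMatrix (x : ℝ) : Matrix V V ℝ :=
  (1 + x • G.adjMatrix ℝ) * Bmat V * (1 + x • G.adjMatrix ℝ)

lemma one_add_smul_adjMatrix_mulVec_one (x : ℝ) :
    (1 + x • G.adjMatrix ℝ) *ᵥ 1 = fun u => 1 + x * G.degree u := by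
  ext u
  simp [add_mulVec, smul_mulVec, SimpleGraph.adjMatrix_mulVec_apply]

lemma one_vecMul_one_add_smul_adjMatrix (x : ℝ) :
    1 ᵥ* (1 + x • G.adjMatrix ℝ) = fun u => 1 + x * (G.degree u : ℝ) := by
  ext u
  simp [vecMul_add, vecMul_smul, SimpleGraph.adjMatrix_vecMul_apply]

lemma interferenceMatrix_apply (x : ℝ) (u v : V) :
    interferenceMatrix G x u v =
      (if u = v then 1 else 0) + 2 * x * G.adjMatrix ℝ u v
        + x ^ 2 * (G.adjMatrix ℝ * G.adjMatrix ℝ) u v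
        - (1 + x * G.degree u) * (1 + x * G.degree v) / Fintype.card V := by
  have hsq : (1 + x • G.adjMatrix ℝ) * (1 + x • G.adjMatrix ℝ) =
      1 + (2 * x) • G.adjMatrix ℝ + x ^ 2 • (G.adjMatrix ℝ * G.adjMatrix ℝ) := by
    simp only [Matrix.add_mul, Matrix.mul_add, Matrix.one_mul, Matrix.mul_one, Matrix.smul_mul,
      Matrix.mul_smul]
    module
  rw [interferenceMatrix, Bmat, Jmat_eq_vecMulVec, Matrix.mul_sub, Matrix.sub_mul, Matrix.mul_one,
    hsq, Matrix.mul_smul, Matrix.smul_mul, mul_vecMulVec, vecMulVec_mul,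
    one_add_smul_adjMatrix_mulVec_one, one_vecMul_one_add_smul_adjMatrix]
  simp only [Matrix.sub_apply, Matrix.add_apply, Matrix.smul_apply, Matrix.one_apply,
    vecMulVec_apply, smul_eq_mul]
  ring

lemma trace_interferenceMatrix (x : ℝ) :
    trace (interferenceMatrix G x) =
      Fintype.card V + x ^ 2 * ∑ u, (G.degree u : ℝ)
        - (∑ u, (1 + x * (G.degree u : ℝ)) ^ 2) / Fintype.card V := by
  simp only [trace, diag_apply, interferenceMatrix_apply, if_true, SimpleGraph.adjMatrix_apply,
    SimpleGraph.irrefl, if_false, SimpleGraph.adjMatrix_mul_self_apply_self, ← sq,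
    Finset.sum_sub_distrib, Finset.sum_add_distrib, ← Finset.mul_sum, ← Finset.sum_div]
  simp

lemma one_dotProduct_interferenceMatrix_mulVec_one (x : ℝ) :
    1 ⬝ᵥ interferenceMatrix G x *ᵥ 1 =
      ∑ u, (1 + x * (G.degree u : ℝ)) ^ 2
        - (∑ u, (1 + x * (G.degree u : ℝ))) ^ 2 / Fintype.card V := by
  rw [interferenceMatrix, ← mulVec_mulVec, ← mulVec_mulVec, dotProduct_mulVec,
    one_vecMul_one_add_smul_adjMatrix, one_add_smul_adjMatrix_mulVec_one, dotProduct_Bmat_mulVec,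
    div_eq_inv_mul]

end Graph

section Grid

open SimpleGraph

lemma hasse_adj_iff_neighbor {u v : Plot a b} : (hasse (Plot a b)).Adj u v ↔ Neighbor u v := by
  rw [hasse_prod, boxProd_adj, ← pathGraph, ← pathGraph, pathGraph_adj, pathGraph_adj, or_comm,
    Neighbor, and_comm, and_comm (a := _ ∨ _)]

instance : DecidableRel (hasse (Plot a b)).Adj :=
  fun _ _ => decidable_of_iff' _ hasse_adj_iff_neighbor

lemma Mmat_eq_adjMatrix : Mmat a b = (hasse (Plot a b)).adjMatrix ℝ := by
  ext u v
  simp only [Mmat, of_apply, adjMatrix_apply, hasse_adj_iff_neighbor]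

/-- An end position of a line of `n` plots; a corner is an end position in both directions. -/
def IsEnd {n : ℕ} (j : Fin n) : Prop := j.val = 0 ∨ j.val + 1 = n

instance {n : ℕ} : DecidablePred (IsEnd (n := n)) :=
  fun _ => inferInstanceAs (Decidable (_ ∨ _))

instance : DecidablePred (IsCorner (a := a) (b := b)) :=
  fun _ => inferInstanceAs (Decidable (_ ∧ _))

lemma isCorner_iff {u : Plot a b} : IsCorner u ↔ IsEnd u.1 ∧ IsEnd u.2 := Iff.rfl

lemma isEnd_fin_two (i : Fin 2) : IsEnd i := by
  unfold IsEnd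
  omega

lemma card_filter_isEnd {n : ℕ} (hn : 2 ≤ n) : Finset.card {j : Fin n | IsEnd j} = 2 := by
  rw [Finset.card_eq_two]
  refine ⟨⟨0, by omega⟩, ⟨n - 1, by omega⟩, by simp only [ne_eq, Fin.mk.injEq]; omega, ?_⟩
  ext j
  rw [Finset.mem_filter_univ, IsEnd]
  simp only [Finset.mem_insert, Finset.mem_singleton, Fin.ext_iff]
  omega

lemma card_filter_isCorner (ha : 2 ≤ a) (hb : 2 ≤ b) :
    Finset.card {u : Plot a b | IsCorner u} = 4 := by
  simp only [isCorner_iff, ← Finset.univ_product_univ]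
  rw [Finset.filter_product, Finset.card_product, card_filter_isEnd ha, card_filter_isEnd hb]

lemma degree_pathGraph {n : ℕ} (hn : 2 ≤ n) (j : Fin n)
    [Fintype ((pathGraph n).neighborSet j)] :
    (pathGraph n).degree j = if IsEnd j then 1 else 2 := by
  rw [← card_neighborFinset_eq_degree]
  split_ifs with hj
  · rw [Finset.card_eq_one]
    rcases hj with hfirst | hlast
    · refine ⟨⟨1, by omega⟩, ?_⟩
      ext k
      simp only [mem_neighborFinset, pathGraph_adj, Finset.mem_singleton, Fin.ext_iff]
      omega
    · refine ⟨⟨n - 2, by omega⟩, ?_⟩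
      ext k
      simp only [mem_neighborFinset, pathGraph_adj, Finset.mem_singleton, Fin.ext_iff]
      omega
  · rw [IsEnd, not_or] at hj
    rw [Finset.card_eq_two]
    refine ⟨⟨j - 1, by omega⟩, ⟨j + 1, by omega⟩, by simp only [ne_eq, Fin.mk.injEq]; omega, ?_⟩
    ext k
    simp only [mem_neighborFinset, pathGraph_adj, Finset.mem_insert, Finset.mem_singleton,
      Fin.ext_iff]
    omega

lemma degree_hasse (ha : 2 ≤ a) (hb : 2 ≤ b) (u : Plot a b) :
    (hasse (Plot a b)).degree u =
      (if IsEnd u.1 then 1 else 2) + if IsEnd u.2 then 1 else 2 := by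
  classical
  rw [← degree_pathGraph ha, ← degree_pathGraph hb, ← degree_boxProd]
  congr!
  exact hasse_prod _ _

lemma degree_hasse_two_rows (hb : 2 ≤ b) (u : Plot 2 b) :
    (hasse (Plot 2 b)).degree u = if IsCorner u then 2 else 3 := by
  simp only [degree_hasse le_rfl hb, isCorner_iff, isEnd_fin_two, if_true, true_and]
  split_ifs <;> rfl

lemma sum_comp_degree_hasse_two_rows (hb : 2 ≤ b) (f : ℕ → ℝ) :
    ∑ u : Plot 2 b, f ((hasse (Plot 2 b)).degree u) = 4 * f 2 + (2 * b - 4) * f 3 := by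
  have hsplit (u : Plot 2 b) :
      f ((hasse (Plot 2 b)).degree u) = f 3 + if IsCorner u then f 2 - f 3 else 0 := by
    rw [degree_hasse_two_rows hb]
    split_ifs <;> ring
  simp only [hsplit, Finset.sum_add_distrib, ← Finset.sum_filter, Finset.sum_const,
    card_filter_isCorner le_rfl hb, Finset.card_univ, Fintype.card_prod, Fintype.card_fin,
    nsmul_eq_mul]
  push_cast
  ring

end Grid

section Decomposition

open SimpleGraph

/-- The ordered pairs of distinct plots that receive the same treatment. -/
def repeatedPairs (s : BlockArray a b t) : Finset (Plot a b × Plot a b) :=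
  {z | z.1 ≠ z.2 ∧ s z.1 = s z.2}

lemma mem_repeatedPairs {s : BlockArray a b t} {z : Plot a b × Plot a b} :
    z ∈ repeatedPairs s ↔ z.1 ≠ z.2 ∧ s z.1 = s z.2 := by
  simp [repeatedPairs]

lemma repeatedPairs_eq_empty {s : BlockArray a b t} (hs : Function.Injective s) :
    repeatedPairs s = ∅ :=
  Finset.filter_false_of_mem fun _ _ hz => hz.1 (hs hz.2)

/-- The value of `q_s(x)` for a binary array `s`. -/
noncomputable def binaryValue (a b t : ℕ) (x : ℝ) : ℝ :=
  trace (interferenceMatrix (hasse (Plot a b)) x)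
    - (t : ℝ)⁻¹ * (1 ⬝ᵥ interferenceMatrix (hasse (Plot a b)) x *ᵥ 1)

lemma sum_filter_eq_trace_add_sum_repeatedPairs (s : BlockArray a b t)
    (K : Matrix (Plot a b) (Plot a b) ℝ) :
    ∑ z : Plot a b × Plot a b with s z.1 = s z.2, K z.1 z.2 =
      trace K + ∑ z ∈ repeatedPairs s, K z.1 z.2 := by
  have hdiag : ({z : Plot a b × Plot a b | s z.1 = s z.2 ∧ z.1 = z.2} : Finset _) =
      Finset.univ.diag := by
    ext z
    simp only [Finset.mem_filter, Finset.mem_univ, true_and, Finset.mem_diag]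
    exact and_iff_right_of_imp (congrArg s)
  rw [← Finset.sum_filter_add_sum_filter_not _ fun z => z.1 = z.2, Finset.filter_filter, hdiag,
    Finset.sum_diag, Finset.filter_filter]
  simp only [and_comm (a := s _ = s _)]
  rfl

lemma qpoly_eq_binaryValue_add (s : BlockArray a b t) (x : ℝ) :
    qpoly (Bmat (Plot a b)) s x =
      binaryValue a b t x
        + ∑ z ∈ repeatedPairs s, interferenceMatrix (hasse (Plot a b)) x z.1 z.2 := by
  set K := interferenceMatrix (hasse (Plot a b)) x with hK
  have hmat : (Tmat s + x • Fmat s)ᵀ * Bmat (Plot a b) * (Tmat s + x • Fmat s) =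
      (Tmat s)ᵀ * K * Tmat s := by
    rw [Tmat_add_smul_Fmat, Mmat_eq_adjMatrix, transpose_mul, transpose_add, transpose_smul,
      transpose_one, transpose_adjMatrix, hK, interferenceMatrix]
    simp only [Matrix.mul_assoc]
  rw [qpoly_eq_trace (isSymm_Bmat _), hmat, trace_Bmat_mul, Fintype.card_fin,
    trace_transpose_Tmat_mul_mul, one_dotProduct_transpose_Tmat_mul_mul,
    sum_filter_eq_trace_add_sum_repeatedPairs, binaryValue]
  ring

lemma qpoly_of_injective {s : BlockArray a b t} (hs : Function.Injective s) (x : ℝ) :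
    qpoly (Bmat (Plot a b)) s x = binaryValue a b t x := by
  rw [qpoly_eq_binaryValue_add, repeatedPairs_eq_empty hs, Finset.sum_empty, add_zero]

lemma binaryValue_two_rows (hb : 2 ≤ b) (t : ℕ) (x : ℝ) :
    binaryValue 2 b t x =
      2 * (b : ℝ) - 1 + (4 / (b : ℝ) - 6) * x + (eta 2 b t - 9 + 10 / (b : ℝ)) * x ^ 2 := by
  have hb0 : (b : ℝ) ≠ 0 := by positivity
  rw [binaryValue, trace_interferenceMatrix, one_dotProduct_interferenceMatrix_mulVec_one,
    sum_comp_degree_hasse_two_rows hb fun d => (d : ℝ),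
    sum_comp_degree_hasse_two_rows hb fun d => (1 + x * (d : ℝ)) ^ 2,
    sum_comp_degree_hasse_two_rows hb fun d => 1 + x * (d : ℝ), eta]
  simp only [Fintype.card_prod, Fintype.card_fin, div_eq_mul_inv, mul_inv]
  push_cast
  generalize (t : ℝ)⁻¹ = τ
  field_simp
  ring

end Decomposition

section PairWeights

open SimpleGraph

/-- Neighboring corners: the pairs of plots that a strictly significant treatment occupies. -/
def IsCornerPair (u v : Plot a b) : Prop := Neighbor u v ∧ IsCorner u ∧ IsCorner v

/-- The entry of the interference matrix of a `2 × b` block at a pair of neighboring corners. -/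
noncomputable def cornerPairWeight (b : ℕ) (x : ℝ) : ℝ := 2 * x - (1 + 2 * x) ^ 2 / (2 * b)

lemma interferenceMatrix_of_adj {u v : Plot a b} (huv : (hasse (Plot a b)).Adj u v) (x : ℝ) :
    interferenceMatrix (hasse (Plot a b)) x u v =
      2 * x - (1 + x * (hasse (Plot a b)).degree u) * (1 + x * (hasse (Plot a b)).degree v)
        / (a * b) := by
  rw [interferenceMatrix_apply, adjMatrix_mul_self_apply_eq_zero cliqueFree_hasse_three huv,
    adjMatrix_apply, if_pos huv, if_neg huv.ne, Fintype.card_prod, Fintype.card_fin,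
    Fintype.card_fin]
  push_cast
  ring

lemma interferenceMatrix_le_of_not_adj {u v : Plot a b} (hne : u ≠ v)
    (huv : ¬ (hasse (Plot a b)).Adj u v) (x : ℝ) :
    interferenceMatrix (hasse (Plot a b)) x u v ≤
      (hasse (Plot a b)).degree u * x ^ 2
        - (1 + x * (hasse (Plot a b)).degree u) * (1 + x * (hasse (Plot a b)).degree v)
          / (a * b) := by
  rw [interferenceMatrix_apply, adjMatrix_apply, if_neg huv, if_neg hne, Fintype.card_prod,
    Fintype.card_fin, Fintype.card_fin]
  have hpaths := mul_le_mul_of_nonneg_left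
    (adjMatrix_mul_self_apply_le_degree (G := hasse (Plot a b)) u v) (sq_nonneg x)
  push_cast
  linarith

lemma interferenceMatrix_of_isCornerPair (hb : 2 ≤ b) {u v : Plot 2 b} (h : IsCornerPair u v)
    (x : ℝ) : interferenceMatrix (hasse (Plot 2 b)) x u v = cornerPairWeight b x := by
  rw [interferenceMatrix_of_adj (hasse_adj_iff_neighbor.2 h.1), degree_hasse_two_rows hb,
    degree_hasse_two_rows hb, if_pos h.2.1, if_pos h.2.2, cornerPairWeight]
  push_cast
  ring

lemma interferenceMatrix_lt_cornerPairWeight (hb : 2 ≤ b) {u v : Plot 2 b} (hne : u ≠ v)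
    (h : ¬ IsCornerPair u v) {x : ℝ} (hx0 : 0 < x) (hx : x < 2 / 3) :
    interferenceMatrix (hasse (Plot 2 b)) x u v < cornerPairWeight b x := by
  have hdeg (w : Plot 2 b) : 2 ≤ ((hasse (Plot 2 b)).degree w : ℝ) ∧
      ((hasse (Plot 2 b)).degree w : ℝ) ≤ 3 := by
    rw [degree_hasse_two_rows hb]
    split_ifs <;> norm_num
  have hfactor (w : Plot 2 b) : 1 + 2 * x ≤ 1 + x * (hasse (Plot 2 b)).degree w := by
    nlinarith [(hdeg w).1]
  have hfactor_lt {w : Plot 2 b} (hw : ¬ IsCorner w) :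
      1 + 2 * x < 1 + x * (hasse (Plot 2 b)).degree w := by
    rw [degree_hasse_two_rows hb, if_neg hw, Nat.cast_ofNat]
    linarith
  rw [cornerPairWeight, sq]
  by_cases huv : (hasse (Plot 2 b)).Adj u v
  · rw [interferenceMatrix_of_adj huv, Nat.cast_ofNat]
    gcongr 2 * x - ?_ / _
    rcases not_and_or.1 fun hc => h ⟨hasse_adj_iff_neighbor.1 huv, hc⟩ with hu | hv
    · exact mul_lt_mul (hfactor_lt hu) (hfactor v) (by positivity) (by positivity)
    · exact mul_lt_mul' (hfactor u) (hfactor_lt hv) (by positivity) (by positivity)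
  · calc interferenceMatrix (hasse (Plot 2 b)) x u v
      _ ≤ _ := interferenceMatrix_le_of_not_adj hne huv x
      _ < 2 * x - (1 + x * (hasse (Plot 2 b)).degree u) * (1 + x * (hasse (Plot 2 b)).degree v)
            / ((2 : ℕ) * b) := by
        gcongr ?_ - _
        nlinarith [(hdeg u).2]
      _ ≤ 2 * x - (1 + 2 * x) * (1 + 2 * x) / (2 * b) := by
        rw [Nat.cast_ofNat]
        gcongr 2 * x - ?_ * ?_ / _
        · exact hfactor u
        · exact hfactor v

end PairWeights

section OptimalPoint

/-- The point `x*`, the smaller of the two zeros of `cornerPairWeight b`. -/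
noncomputable def optimalPoint (b : ℕ) : ℝ := ((b : ℝ) - 1 - √(((b : ℝ) - 1) ^ 2 - 1)) / 2

lemma four_mul_optimalPoint_sq_add_one (hb : 2 ≤ b) :
    4 * optimalPoint b ^ 2 + 1 = 4 * (b - 1) * optimalPoint b := by
  have hb' : (2 : ℝ) ≤ b := mod_cast hb
  have hsqrt : √(((b : ℝ) - 1) ^ 2 - 1) ^ 2 = ((b : ℝ) - 1) ^ 2 - 1 :=
    Real.sq_sqrt (by nlinarith)
  rw [optimalPoint]
  linear_combination hsqrt

lemma optimalPoint_pos (hb : 2 ≤ b) : 0 < optimalPoint b := by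
  have hb' : (2 : ℝ) ≤ b := mod_cast hb
  nlinarith [four_mul_optimalPoint_sq_add_one hb, sq_nonneg (optimalPoint b)]

lemma optimalPoint_lt_quarter (hb : 3 ≤ b) : optimalPoint b < 1 / 4 := by
  have hb' : (3 : ℝ) ≤ b := mod_cast hb
  have hsqrt : (b : ℝ) - 3 / 2 < √(((b : ℝ) - 1) ^ 2 - 1) :=
    Real.lt_sqrt_of_sq_lt (by nlinarith)
  rw [optimalPoint]
  linarith

lemma cornerPairWeight_optimalPoint (hb : 2 ≤ b) : cornerPairWeight b (optimalPoint b) = 0 := by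
  have hb0 : (b : ℝ) ≠ 0 := by positivity
  rw [cornerPairWeight]
  field_simp
  linear_combination -four_mul_optimalPoint_sq_add_one hb

end OptimalPoint

section Characterization

open SimpleGraph

lemma one_lt_f0_iff {s : BlockArray a b t} {k : Fin t} :
    1 < f0 s k ↔ ∃ u v, s u = k ∧ s v = k ∧ u ≠ v :=
  Set.one_lt_ncard_iff

lemma StrictSignificant.significant {s : BlockArray a b t} {k : Fin t}
    (h : StrictSignificant s k) : Significant s k := by
  obtain ⟨u, v, hne, hfib, huv, hu, -⟩ := h
  exact ⟨u, v, hne, hfib, huv, Or.inl hu⟩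

lemma Significant.one_lt_f0 {s : BlockArray a b t} {k : Fin t} (h : Significant s k) :
    1 < f0 s k := by
  obtain ⟨u, v, hne, hfib, -⟩ := h
  rw [f0, hfib, Set.ncard_pair hne]
  exact one_lt_two

lemma mem_QsetStar_iff {s : BlockArray a b t} {j : ℕ} :
    s ∈ QsetStar a b t j ↔
      {k | StrictSignificant s k}.ncard = j ∧ ∀ k, 1 < f0 s k → StrictSignificant s k := by
  constructor
  · rintro ⟨⟨hcard, hrest⟩, hstrict⟩
    refine ⟨?_, fun k hk => hstrict k (by_contra fun hns => (hrest k hns).not_gt hk)⟩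
    rw [← hcard]
    congr 1
    ext k
    exact ⟨StrictSignificant.significant, hstrict k⟩
  · rintro ⟨hcard, hrep⟩
    have hstrict : ∀ k, Significant s k → StrictSignificant s k :=
      fun k hk => hrep k hk.one_lt_f0
    refine ⟨⟨?_, fun k hns => not_lt.1 fun hk => hns (hrep k hk).significant⟩, hstrict⟩
    rw [← hcard]
    congr 1
    ext k
    exact ⟨hstrict k, StrictSignificant.significant⟩

lemma QsetStar_zero : QsetStar a b t 0 = Qset a b t 0 := by
  ext s
  refine ⟨fun hs => hs.1, fun hs => ⟨hs, fun k hk => ?_⟩⟩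
  have hempty : {k | Significant s k} = ∅ := (Set.ncard_eq_zero (Set.toFinite _)).1 hs.1
  exact (hempty.subset hk).elim

lemma strictSignificant_of_one_lt_f0 {s : BlockArray a b t}
    (h : ∀ z ∈ repeatedPairs s, IsCornerPair z.1 z.2) {k : Fin t} (hk : 1 < f0 s k) :
    StrictSignificant s k := by
  obtain ⟨u, v, hu, hv, hne⟩ := one_lt_f0_iff.1 hk
  have hpair {q r : Plot a b} (hqr : q ≠ r) (hq : s q = k) (hr : s r = k) : IsCornerPair q r :=
    h (q, r) (mem_repeatedPairs.2 ⟨hqr, hq.trans hr.symm⟩)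
  obtain ⟨hadj, hcu, hcv⟩ := hpair hne hu hv
  refine ⟨u, v, hne, Set.Subset.antisymm (fun w hw => ?_) ?_, hadj, hcu, hcv⟩
  · by_contra hw'
    obtain ⟨hwu, hwv⟩ := not_or.1 hw'
    exact cliqueFree_hasse_three {w, u, v} <| is3Clique_triple_iff.2
      ⟨hasse_adj_iff_neighbor.2 (hpair hwu hw hu).1, hasse_adj_iff_neighbor.2 (hpair hwv hw hv).1,
        hasse_adj_iff_neighbor.2 hadj⟩
  · rintro w (rfl | rfl)
    exacts [hu, hv]

lemma isCornerPair_of_strictSignificant {s : BlockArray a b t} {u v : Plot a b} (hne : u ≠ v)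
    (huv : s u = s v) (h : StrictSignificant s (s v)) : IsCornerPair u v := by
  obtain ⟨q, r, -, hfib, hadj, hq, hr⟩ := h
  have hu : u ∈ ({q, r} : Set (Plot a b)) := hfib.subset huv
  have hv : v ∈ ({q, r} : Set (Plot a b)) := hfib.subset rfl
  rcases hu with rfl | rfl <;> rcases hv with rfl | rfl
  · exact (hne rfl).elim
  · exact ⟨hadj, hq, hr⟩
  · exact ⟨hasse_adj_iff_neighbor.1 (hasse_adj_iff_neighbor.2 hadj).symm, hr, hq⟩
  · exact (hne rfl).elim

lemma forall_mem_repeatedPairs_isCornerPair_iff {s : BlockArray a b t} :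
    (∀ z ∈ repeatedPairs s, IsCornerPair z.1 z.2) ↔ ∀ k, 1 < f0 s k → StrictSignificant s k := by
  refine ⟨fun h k => strictSignificant_of_one_lt_f0 h, fun h z hz => ?_⟩
  obtain ⟨hne, heq⟩ := mem_repeatedPairs.1 hz
  exact isCornerPair_of_strictSignificant hne heq (h _ (one_lt_f0_iff.2 ⟨z.1, z.2, heq, rfl, hne⟩))

lemma ncard_strictSignificant_le_two (ha : 2 ≤ a) (hb : 2 ≤ b) (s : BlockArray a b t) :
    {k | StrictSignificant s k}.ncard ≤ 2 := by
  classical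
  let corners : Finset (Plot a b) := {u | IsCorner u ∧ StrictSignificant s (s u)}
  let treatments : Finset (Fin t) := {k | StrictSignificant s k}
  have htwo (k) (hk : k ∈ treatments) : 2 ≤ Finset.card {u ∈ corners | s u = k} := by
    have hstrict : StrictSignificant s k := Finset.mem_filter_univ k |>.1 hk
    obtain ⟨u, v, hne, hfib, -, hu, hv⟩ := id hstrict
    rw [← Finset.card_pair hne]
    refine Finset.card_le_card fun w hw => ?_
    have hw' : w = u ∨ w = v := by simpa using hw
    have hwk : s w = k := hfib.superset hw'
    rcases hw' with rfl | rfl <;> simp [corners, *]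
  have hle : 2 * treatments.card ≤ corners.card :=
    Finset.mul_card_image_le_card_of_maps_to (f := s) (by simp [corners, treatments]) 2 htwo
  have hcorners : corners.card ≤ 4 := by
    rw [← card_filter_isCorner ha hb]
    exact Finset.card_le_card (Finset.monotone_filter_right _ fun _ _ hu => hu.1)
  have htreatments : {k | StrictSignificant s k} = (treatments : Set (Fin t)) := by
    simp [treatments]
  rw [htreatments, Set.ncard_coe_finset]
  omega

lemma mem_Qset_zero_union_QsetStar_iff (ha : 2 ≤ a) (hb : 2 ≤ b) {s : BlockArray a b t} :
    s ∈ Qset a b t 0 ∪ QsetStar a b t 1 ∪ QsetStar a b t 2 ↔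
      ∀ z ∈ repeatedPairs s, IsCornerPair z.1 z.2 := by
  have hcard := ncard_strictSignificant_le_two ha hb s
  rw [forall_mem_repeatedPairs_isCornerPair_iff, ← QsetStar_zero, Set.mem_union, Set.mem_union,
    mem_QsetStar_iff, mem_QsetStar_iff, mem_QsetStar_iff, ← or_and_right, ← or_and_right,
    and_iff_right (by omega)]

end Characterization

section UpperBound

open SimpleGraph

lemma interferenceMatrix_optimalPoint_neg (hb : 3 ≤ b) {u v : Plot 2 b} (hne : u ≠ v)
    (h : ¬ IsCornerPair u v) :
    interferenceMatrix (hasse (Plot 2 b)) (optimalPoint b) u v < 0 := by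
  have hb2 : 2 ≤ b := by omega
  rw [← cornerPairWeight_optimalPoint hb2]
  exact interferenceMatrix_lt_cornerPairWeight hb2 hne h (optimalPoint_pos hb2)
    ((optimalPoint_lt_quarter hb).trans (by norm_num))

lemma interferenceMatrix_optimalPoint_eq_zero_iff (hb : 3 ≤ b) {u v : Plot 2 b} (hne : u ≠ v) :
    interferenceMatrix (hasse (Plot 2 b)) (optimalPoint b) u v = 0 ↔
      IsCornerPair u v := by
  have hb2 : 2 ≤ b := by omega
  refine ⟨fun h0 => by_contra fun h => (interferenceMatrix_optimalPoint_neg hb hne h).ne h0,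
    fun h => ?_⟩
  rw [interferenceMatrix_of_isCornerPair hb2 h, cornerPairWeight_optimalPoint hb2]

lemma interferenceMatrix_optimalPoint_nonpos (hb : 3 ≤ b) {u v : Plot 2 b} (hne : u ≠ v) :
    interferenceMatrix (hasse (Plot 2 b)) (optimalPoint b) u v ≤ 0 := by
  by_cases h : IsCornerPair u v
  · exact ((interferenceMatrix_optimalPoint_eq_zero_iff hb hne).2 h).le
  · exact (interferenceMatrix_optimalPoint_neg hb hne h).le

lemma qpoly_optimalPoint_le (hb : 3 ≤ b) (s : BlockArray 2 b t) :
    qpoly (Bmat (Plot 2 b)) s (optimalPoint b) ≤ binaryValue 2 b t (optimalPoint b) := by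
  rw [qpoly_eq_binaryValue_add]
  exact add_le_of_nonpos_right <| Finset.sum_nonpos fun z hz =>
    interferenceMatrix_optimalPoint_nonpos hb (mem_repeatedPairs.1 hz).1

lemma qpoly_optimalPoint_eq_iff (hb : 3 ≤ b) {s : BlockArray 2 b t} :
    qpoly (Bmat (Plot 2 b)) s (optimalPoint b) = binaryValue 2 b t (optimalPoint b) ↔
      ∀ z ∈ repeatedPairs s, IsCornerPair z.1 z.2 := by
  rw [qpoly_eq_binaryValue_add, add_eq_left, Finset.sum_eq_zero_iff_of_nonpos fun z hz =>
    interferenceMatrix_optimalPoint_nonpos hb (mem_repeatedPairs.1 hz).1]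
  exact forall₂_congr fun z hz =>
    interferenceMatrix_optimalPoint_eq_zero_iff hb (mem_repeatedPairs.1 hz).1

end UpperBound

section MergedEndColumns

open SimpleGraph

/-- Identifies the two plots of each end column of a `2 × b` block. Composed with an injective
labelling it yields a member of `Q₂*`. -/
def mergeEndColumns (u : Plot 2 b) : Plot 2 b := if IsCorner u then (0, u.2) else u

lemma isCornerPair_two_rows_iff (hb : 3 ≤ b) {u v : Plot 2 b} :
    IsCornerPair u v ↔ IsCorner u ∧ v = (u.1.rev, u.2) := by
  simp only [IsCornerPair, Neighbor, IsCorner, Prod.ext_iff, Fin.ext_iff, Fin.val_rev]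
  omega

lemma ne_and_mergeEndColumns_eq_iff (hb : 3 ≤ b) {u v : Plot 2 b} :
    u ≠ v ∧ mergeEndColumns u = mergeEndColumns v ↔ IsCornerPair u v := by
  rw [isCornerPair_two_rows_iff hb, mergeEndColumns, mergeEndColumns]
  split_ifs with hu hv hv <;>
  simp only [IsCorner, Prod.ext_iff, Fin.ext_iff, Fin.val_rev, ne_eq, Fin.coe_ofNat_eq_mod,
    true_and] at * <;>
  omega

lemma mem_repeatedPairs_comp_mergeEndColumns (hb : 3 ≤ b) {f : BlockArray 2 b t}
    (hf : Function.Injective f) {z : Plot 2 b × Plot 2 b} :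
    z ∈ repeatedPairs (f ∘ mergeEndColumns) ↔ IsCornerPair z.1 z.2 := by
  rw [mem_repeatedPairs, ← ne_and_mergeEndColumns_eq_iff hb, Function.comp_apply,
    Function.comp_apply, hf.eq_iff]

lemma card_repeatedPairs_comp_mergeEndColumns (hb : 3 ≤ b) {f : BlockArray 2 b t}
    (hf : Function.Injective f) : (repeatedPairs (f ∘ mergeEndColumns)).card = 4 := by
  have himage : repeatedPairs (f ∘ mergeEndColumns) =
      ({u : Plot 2 b | IsCorner u} : Finset _).image fun u => (u, (u.1.rev, u.2)) := by
    ext ⟨u, v⟩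
    rw [mem_repeatedPairs_comp_mergeEndColumns hb hf, isCornerPair_two_rows_iff hb]
    simp only [Finset.mem_image, Finset.mem_filter_univ, Prod.mk.injEq]
    constructor
    · rintro ⟨hu, rfl⟩
      exact ⟨u, hu, rfl, rfl⟩
    · rintro ⟨u, hu, rfl, rfl⟩
      exact ⟨hu, rfl⟩
  rw [himage, Finset.card_image_of_injective _ fun _ _ h => congrArg Prod.fst h,
    card_filter_isCorner le_rfl (by omega)]

lemma qpoly_comp_mergeEndColumns (hb : 3 ≤ b) {f : BlockArray 2 b t} (hf : Function.Injective f)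
    (x : ℝ) :
    qpoly (Bmat (Plot 2 b)) (f ∘ mergeEndColumns) x =
      binaryValue 2 b t x + 4 * cornerPairWeight b x := by
  have hweight : ∀ z ∈ repeatedPairs (f ∘ mergeEndColumns),
      interferenceMatrix (hasse (Plot 2 b)) x z.1 z.2 = cornerPairWeight b x :=
    fun z hz => interferenceMatrix_of_isCornerPair (by omega)
      ((mem_repeatedPairs_comp_mergeEndColumns hb hf).1 hz) x
  rw [qpoly_eq_binaryValue_add, Finset.sum_congr rfl hweight, Finset.sum_const,
    card_repeatedPairs_comp_mergeEndColumns hb hf, nsmul_eq_mul, Nat.cast_ofNat]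

end MergedEndColumns

section LowerBound

lemma eta_two_rows_sub_nine_add (hb : b ≠ 0) :
    eta 2 b t - 9 + 10 / b = 6 * b - 13 + 10 / b - (4 - 8 / b) / t := by
  have hb0 : (b : ℝ) ≠ 0 := mod_cast hb
  rw [eta]
  simp only [div_eq_mul_inv, mul_inv]
  generalize (t : ℝ)⁻¹ = τ
  push_cast
  field_simp
  ring

lemma eta_two_rows_sub_nine_add_le (hb : 3 ≤ b) :
    eta 2 b t - 9 + 10 / b ≤ 6 * (b - 1) := by
  have hb' : (3 : ℝ) ≤ b := mod_cast hb
  have hcorr : 0 ≤ (4 - 8 / (b : ℝ)) / t := by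
    refine div_nonneg (sub_nonneg.2 <| (div_le_iff₀ (by linarith)).2 (by linarith)) (by positivity)
  have hten : 10 / (b : ℝ) ≤ 7 := (div_le_iff₀ (by linarith)).2 (by linarith)
  rw [eta_two_rows_sub_nine_add (by omega)]
  linarith

lemma lt_eta_two_rows_sub_nine_add (hb : 3 ≤ b) (ht : 0 < t) :
    8 / b < eta 2 b t - 9 + 10 / b := by
  have hb' : (3 : ℝ) ≤ b := mod_cast hb
  have ht' : (1 : ℝ) ≤ t := mod_cast ht
  have hcorr : (4 - 8 / (b : ℝ)) / t ≤ 4 - 8 / b :=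
    div_le_self (sub_nonneg.2 <| (div_le_iff₀ (by linarith)).2 (by linarith)) ht'
  have hpos : 0 < 10 / (b : ℝ) := by positivity
  rw [eta_two_rows_sub_nine_add (by omega)]
  linarith

lemma binaryValue_lt_of_lt_optimalPoint (hb : 3 ≤ b) (ht : 0 < t) {x : ℝ}
    (hx : x < optimalPoint b) :
    binaryValue 2 b t (optimalPoint b) < binaryValue 2 b t x := by
  have hb2 : 2 ≤ b := by omega
  have hb' : (3 : ℝ) ≤ b := mod_cast hb
  rw [binaryValue_two_rows hb2, binaryValue_two_rows hb2]
  have hpos := optimalPoint_pos hb2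
  have hquarter := optimalPoint_lt_quarter hb
  have hquad := four_mul_optimalPoint_sq_add_one hb2
  have hEpos := lt_eta_two_rows_sub_nine_add hb ht
  have hEle := eta_two_rows_sub_nine_add_le (t := t) hb
  set y := optimalPoint b
  set E := eta 2 b t - 9 + 10 / (b : ℝ)
  have hfour : 4 / (b : ℝ) ≤ 2 := (div_le_iff₀ (by linarith)).2 (by linarith)
  have hE : 0 < E := lt_trans (by positivity) hEpos
  have hslope : 4 / (b : ℝ) - 6 + E * (x + y) < 0 := by
    calc 4 / (b : ℝ) - 6 + E * (x + y)
      _ ≤ 2 - 6 + E * (y + y) := by gcongr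
      _ ≤ 2 - 6 + 6 * (b - 1) * (y + y) := by gcongr
      _ = 12 * y ^ 2 - 1 := by linear_combination -3 * hquad
      _ < 0 := by nlinarith
  linear_combination mul_pos_of_neg_of_neg (sub_neg.2 hx) hslope

lemma strictMonoOn_binaryValue_add_cornerPairWeight (hb : 3 ≤ b) (ht : 0 < t) :
    StrictMonoOn (fun x => binaryValue 2 b t x + 4 * cornerPairWeight b x) (Set.Ici 0) := by
  have hb' : (3 : ℝ) ≤ b := mod_cast hb
  have hb0 : (b : ℝ) ≠ 0 := by positivity
  have hexpand (x : ℝ) : binaryValue 2 b t x + 4 * cornerPairWeight b x =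
      2 * b - 1 - 2 / b + (2 - 4 / b) * x + (eta 2 b t - 9 + 10 / b - 8 / b) * x ^ 2 := by
    rw [binaryValue_two_rows (by omega), cornerPairWeight]
    field_simp
    ring
  have hlin : 0 < 2 - 4 / (b : ℝ) := sub_pos.2 <| (div_lt_iff₀ (by linarith)).2 (by linarith)
  have hquad := sub_pos.2 (lt_eta_two_rows_sub_nine_add hb ht)
  intro x hx y _ hxy
  have hx0 : 0 ≤ x := hx
  simp only [hexpand]
  gcongr


lemma le_rfun (W : Matrix (Plot a b) (Plot a b) ℝ) (s : BlockArray a b t) (x : ℝ) :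
    qpoly W s x ≤ rfun t W x :=
  le_csSup (Set.finite_range _).bddAbove (Set.mem_range_self s)

lemma exists_injective_blockArray (h : a * b ≤ t) :
    ∃ f : BlockArray a b t, Function.Injective f := by
  obtain ⟨f⟩ : Nonempty (Plot a b ↪ Fin t) :=
    Function.Embedding.nonempty_of_card_le (by simpa using h)
  exact ⟨f, f.injective⟩

end LowerBound

/-- Theorem `t=p`, case `a = 2`, `b ≥ 3`: the quadratics `q_s` are
maximized at `x* = (b−1−√((b−1)²−1))/2` exactly on `Q₀ ∪ Q₁* ∪ Q₂*`. -/
theorem optimality_t_ge_p_a_eq_two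
    (b t : ℕ) (hb : 3 ≤ b) (ht : 2 * b ≤ t)
    (xstar ystar : ℝ)
    (hx : xstar = ((b : ℝ) - 1 - Real.sqrt (((b : ℝ) - 1) ^ 2 - 1)) / 2)
    (hy : ystar = 2 * (b : ℝ) - 1 + (4 / (b : ℝ) - 6) * xstar +
        (eta 2 b t - 9 + 10 / (b : ℝ)) * xstar ^ 2) :
    (∀ s : BlockArray 2 b t,
       qpoly (Bmat (Plot 2 b)) s xstar ≤ ystar ∧
       (qpoly (Bmat (Plot 2 b)) s xstar = ystar ↔
         s ∈ Qset 2 b t 0 ∪ QsetStar 2 b t 1 ∪ QsetStar 2 b t 2)) ∧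
    (∀ x : ℝ, x ≠ xstar → ystar < rfun t (Bmat (Plot 2 b)) x) := by
  obtain rfl : xstar = optimalPoint b := hx
  obtain rfl : ystar = binaryValue 2 b t (optimalPoint b) :=
    hy.trans (binaryValue_two_rows (by omega) t _).symm
  have ht0 : 0 < t := by omega
  refine ⟨fun s => ⟨qpoly_optimalPoint_le hb s, ?_⟩, fun x hx => ?_⟩
  · rw [qpoly_optimalPoint_eq_iff hb, mem_Qset_zero_union_QsetStar_iff le_rfl (by omega)]
  obtain ⟨f, hf⟩ := exists_injective_blockArray ht
  rcases hx.lt_or_gt with hleft | hright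
  · calc binaryValue 2 b t (optimalPoint b)
      _ < binaryValue 2 b t x := binaryValue_lt_of_lt_optimalPoint hb ht0 hleft
      _ = qpoly (Bmat (Plot 2 b)) f x := (qpoly_of_injective hf x).symm
      _ ≤ rfun t (Bmat (Plot 2 b)) x := le_rfun _ f x
  · have hpos := optimalPoint_pos (b := b) (by omega)
    calc binaryValue 2 b t (optimalPoint b)
      _ = binaryValue 2 b t (optimalPoint b) + 4 * cornerPairWeight b (optimalPoint b) := by
        rw [cornerPairWeight_optimalPoint (by omega), mul_zero, add_zero]
      _ < binaryValue 2 b t x + 4 * cornerPairWeight b x :=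
        strictMonoOn_binaryValue_add_cornerPairWeight hb ht0 hpos.le (hpos.trans hright).le hright
      _ = qpoly (Bmat (Plot 2 b)) (f ∘ mergeEndColumns) x :=
        (qpoly_comp_mergeEndColumns hb hf x).symm
      _ ≤ rfun t (Bmat (Plot 2 b)) x := le_rfun _ _ x

end TwoDim
end

section
/- Assume a = b = 2 and t ≥ p = 4. Then: (i) q_s(1/2) ≤ 2 for every block array s, with equality if and only if s ∈ Q₀ ∪ Q₁* ∪ Q₂*; and (ii) for every real x ≠ 1/2, max_{s∈S} q_s(x) > 2. (That is, x* = 1/2, y* = 2 and Q = Q₀ ∪ Q₁* ∪ Q₂*.) -/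
open Matrix

namespace TwoDim

variable {a b t : ℕ}

/-!
Write `U = I + xM` and let `E` be the matrix recording which pairs of plots share a treatment.
Since all four plots have two neighbors, centering the treatments has no effect and
`q_s(x) = tr(U B U E)`. The neighbor graph is a 4-cycle, so `M² = 2(J - M)` and `U B U` is a
combination of `I`, `M` and `J`; the traces of these against `E` count equally treated pairs.
With `n` such pairs of neighbors and `d` such diagonal pairs this gives
`q_s(x) = 2 - d + 2(2 - n + d)(x - 1/2)²`.
At `x = 1/2` only `d` matters, and `d = 0` describes `Q₀ ∪ Q₁* ∪ Q₂*`. For any other `x`, an array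
whose only equally treated pair is a single pair of neighbors has `q_s(x) = 2 + 2(x - 1/2)² > 2`.
-/

section Trace

variable {n : Type*} [Fintype n]

lemma trace_Jmat_mul (A : Matrix n n ℝ) : (Jmat n * A).trace = ∑ i, (A *ᵥ 1) i := by
  rw [trace_mul_comm]
  simp [trace, Jmat, mul_apply, mulVec, dotProduct]

lemma mul_Jmat_of_mulVec_one {A : Matrix n n ℝ} {c : ℝ} (hA : A *ᵥ 1 = c • 1) :
    A * Jmat n = c • Jmat n := by
  ext i j
  simpa [Jmat, mul_apply, mulVec, dotProduct] using congrFun hA i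

variable [DecidableEq n]

lemma Bmat_mulVec_one : Bmat n *ᵥ 1 = 0 := by
  ext i
  have : Nonempty n := ⟨i⟩
  simp only [Bmat, Jmat, sub_mulVec, one_mulVec, smul_mulVec]
  simp [mulVec, dotProduct]

lemma Bmat_isSymm : (Bmat n).IsSymm := by
  ext i j
  simp [Bmat, Jmat, one_apply, eq_comm]

lemma trace_Bmat_mul_of_mulVec_one {A : Matrix n n ℝ} (hA : A *ᵥ 1 = 0) :
    (Bmat n * A).trace = A.trace := by
  simp [Bmat, sub_mul, trace_Jmat_mul, hA]

end Trace

/-- The coincidence matrix of a block array, with entry `1` at each pair of plots carrying the same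
treatment and `0` elsewhere. -/
def coincidence (s : BlockArray a b t) : Matrix (Plot a b) (Plot a b) ℝ :=
  Matrix.of fun q r => if s q = s r then 1 else 0

lemma Tmat_mul_transpose (s : BlockArray a b t) : Tmat s * (Tmat s)ᵀ = coincidence s := by
  ext q r
  simp [mul_apply, Tmat, coincidence, eq_comm]

lemma Neighbor.symm {q r : Plot a b} (h : Neighbor q r) : Neighbor r q := by
  unfold Neighbor at h ⊢
  omega

lemma Mmat_isSymm : (Mmat a b).IsSymm := by
  ext q r
  simp [Mmat, show Neighbor r q ↔ Neighbor q r from ⟨.symm, .symm⟩]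

lemma coincidence_isSymm (s : BlockArray a b t) : (coincidence s).IsSymm := by
  ext q r
  simp [coincidence, eq_comm]

lemma qpoly_eq_trace_quadratic {W : Matrix (Plot a b) (Plot a b) ℝ} (hW : W.IsSymm)
    (s : BlockArray a b t) (x : ℝ) :
    qpoly W s x =
      (Bmat (Fin t) * ((Tmat s + x • Fmat s)ᵀ * W * (Tmat s + x • Fmat s))).trace := by
  have cross : (Bmat (Fin t) * ((Fmat s)ᵀ * W * Tmat s)).trace = cs01 W s := by
    rw [← trace_transpose, cs01, Cs01, trace_mul_comm]
    simp only [transpose_mul, transpose_transpose, hW.eq, Bmat_isSymm.eq, Matrix.mul_assoc]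
  simp only [transpose_add, transpose_smul, Matrix.add_mul, Matrix.mul_add, Matrix.smul_mul,
    Matrix.mul_smul, trace_add, trace_smul, smul_eq_mul, cross]
  simp only [qpoly, cs00, cs01, cs11, Cs00, Cs01, Cs11]
  ring

/-- If all plots have the same number of neighbors, centering the treatments is redundant, since
`W` already annihilates the row sums of `(1 + xM) T_s`. -/
lemma qpoly_eq_trace_coincidence {W : Matrix (Plot a b) (Plot a b) ℝ} (hW : W.IsSymm)
    (hW_one : W *ᵥ 1 = 0) {c : ℝ} (hM : Mmat a b *ᵥ 1 = c • 1) (s : BlockArray a b t) (x : ℝ) :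
    qpoly W s x = ((1 + x • Mmat a b) * W * (1 + x • Mmat a b) * coincidence s).trace := by
  set U := 1 + x • Mmat a b with hU
  have factor : Tmat s + x • Fmat s = U * Tmat s := by
    simp [hU, Fmat, Matrix.add_mul]
  have U_symm : U.IsSymm := by simp [hU, IsSymm, Mmat_isSymm.eq]
  have rowSums : (U * Tmat s) *ᵥ 1 = (1 + x * c) • 1 := by
    rw [← mulVec_mulVec, Tmat_mulVec_one, hU, add_mulVec, one_mulVec, smul_mulVec, hM, smul_smul,
      add_smul, one_smul]
  have centered : ((U * Tmat s)ᵀ * W * (U * Tmat s)) *ᵥ 1 = 0 := by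
    rw [← mulVec_mulVec, rowSums, mulVec_smul, ← mulVec_mulVec, hW_one, mulVec_zero, smul_zero]
  calc qpoly W s x = ((U * Tmat s)ᵀ * W * (U * Tmat s)).trace := by
        rw [qpoly_eq_trace_quadratic hW, factor, trace_Bmat_mul_of_mulVec_one centered]
    _ = ((Tmat s)ᵀ * (U * W * U * Tmat s)).trace := by
        simp only [transpose_mul, U_symm.eq, Matrix.mul_assoc]
    _ = (U * W * U * coincidence s).trace := by
        rw [trace_mul_comm, Matrix.mul_assoc, Tmat_mul_transpose]

section PairCounts

/-- The `0/1` matrix of a relation between plots; its trace against `coincidence s` counts the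
related pairs of plots to which `s` gives the same treatment. -/
def relationMat (R : Plot a b → Plot a b → Prop) [DecidableRel R] :
    Matrix (Plot a b) (Plot a b) ℝ :=
  Matrix.of fun q r => if R q r then 1 else 0

lemma trace_relationMat_mul_coincidence (R : Plot a b → Plot a b → Prop) [DecidableRel R]
    (s : BlockArray a b t) :
    (relationMat R * coincidence s).trace =
      {qr : Plot a b × Plot a b | R qr.1 qr.2 ∧ s qr.1 = s qr.2}.ncard := by
  rw [Set.ncard_eq_toFinset_card', Set.toFinset_ofPred, Finset.card_filter, Nat.cast_sum,
    Fintype.sum_prod_type]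
  simp only [trace, diag_apply, mul_apply, relationMat, coincidence, of_apply]
  refine Finset.sum_congr rfl fun q _ => Finset.sum_congr rfl fun r _ => ?_
  by_cases hR : R q r <;> simp [hR, eq_comm]

lemma trace_transpose_mul_coincidence (A : Matrix (Plot a b) (Plot a b) ℝ)
    (s : BlockArray a b t) : (Aᵀ * coincidence s).trace = (A * coincidence s).trace := by
  rw [← trace_transpose, transpose_mul, transpose_transpose, (coincidence_isSymm s).eq,
    trace_mul_comm]

/-- `r` is the right-hand neighbor of `q`. -/
abbrev RightNeighbor (q r : Plot a b) : Prop := q.1 = r.1 ∧ q.2.val + 1 = r.2.val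

/-- `r` is the neighbor of `q` in the next row. -/
abbrev LowerNeighbor (q r : Plot a b) : Prop := q.2 = r.2 ∧ q.1.val + 1 = r.1.val

/-- `r` is one row before and one column after `q`, the relation counted by `zd1`. -/
abbrev UpperRightDiagonal (q r : Plot a b) : Prop := r.1.val + 1 = q.1.val ∧ q.2.val + 1 = r.2.val

/-- `r` is one row and one column after `q`, the relation counted by `zd2`. -/
abbrev LowerRightDiagonal (q r : Plot a b) : Prop := q.1.val + 1 = r.1.val ∧ q.2.val + 1 = r.2.val

lemma Mmat_eq_add_relationMat : Mmat a b =
    relationMat RightNeighbor + (relationMat RightNeighbor)ᵀ +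
      (relationMat LowerNeighbor + (relationMat LowerNeighbor)ᵀ) := by
  ext q r
  simp only [Mmat, relationMat, Matrix.add_apply, transpose_apply, of_apply]
  split_ifs <;> first | (unfold Neighbor at *; omega) | norm_num

lemma trace_Mmat_mul_coincidence (s : BlockArray a b t) :
    (Mmat a b * coincidence s).trace = z1 s := by
  simp only [Mmat_eq_add_relationMat, Matrix.add_mul, trace_add, trace_transpose_mul_coincidence,
    trace_relationMat_mul_coincidence, z1, zr1, zc1, and_assoc]
  ring

lemma trace_coincidence (s : BlockArray a b t) : (coincidence s).trace = a * b := by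
  simp [trace, coincidence]

end PairCounts

section TwoByTwo

lemma Mmat_two_mulVec_one : Mmat 2 2 *ᵥ 1 = (2 : ℝ) • 1 := by
  ext ⟨i, j⟩
  fin_cases i <;> fin_cases j <;>
    norm_num [Mmat, Neighbor, mulVec, dotProduct, Fintype.sum_prod_type, -Finset.sum_boole]

lemma Mmat_two_mul_self : Mmat 2 2 * Mmat 2 2 = (2 : ℝ) • (Jmat (Plot 2 2) - Mmat 2 2) := by
  ext ⟨i, j⟩ ⟨k, l⟩
  fin_cases i <;> fin_cases j <;> fin_cases k <;> fin_cases l <;>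
    norm_num [Mmat, Jmat, Neighbor, mul_apply, Fintype.sum_prod_type]

lemma Jmat_two_eq : Jmat (Plot 2 2) = 1 + Mmat 2 2 +
    (relationMat UpperRightDiagonal + (relationMat UpperRightDiagonal)ᵀ +
      (relationMat LowerRightDiagonal + (relationMat LowerRightDiagonal)ᵀ)) := by
  ext ⟨i, j⟩ ⟨k, l⟩
  fin_cases i <;> fin_cases j <;> fin_cases k <;> fin_cases l <;>
    simp [Jmat, Mmat, Neighbor, relationMat, UpperRightDiagonal, LowerRightDiagonal]

lemma trace_Jmat_two_mul_coincidence (s : BlockArray 2 2 t) :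
    (Jmat (Plot 2 2) * coincidence s).trace = 4 + z1 s + 2 * (zd1 s + zd2 s) := by
  simp only [Jmat_two_eq, Matrix.add_mul, one_mul, trace_add, trace_transpose_mul_coincidence,
    trace_coincidence, trace_Mmat_mul_coincidence, trace_relationMat_mul_coincidence, zd1, zd2,
    and_assoc]
  push_cast
  ring

lemma sandwich_Bmat_two (x : ℝ) :
    (1 + x • Mmat 2 2) * Bmat (Plot 2 2) * (1 + x • Mmat 2 2) =
      1 + (2 * x - 2 * x ^ 2) • Mmat 2 2 + (x ^ 2 - x - 1 / 4) • Jmat (Plot 2 2) := by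
  have MJ : Mmat 2 2 * Jmat (Plot 2 2) = (2 : ℝ) • Jmat (Plot 2 2) :=
    mul_Jmat_of_mulVec_one Mmat_two_mulVec_one
  have JM : Jmat (Plot 2 2) * Mmat 2 2 = (2 : ℝ) • Jmat (Plot 2 2) := by
    simpa [Mmat_isSymm.eq, show (Jmat (Plot 2 2))ᵀ = Jmat (Plot 2 2) from rfl]
      using congrArg transpose MJ
  simp only [Bmat, Fintype.card_prod, Fintype.card_fin, add_mul, mul_add, mul_sub, sub_mul, one_mul,
    mul_one, smul_mul_assoc, mul_smul_comm, MJ, JM, Mmat_two_mul_self]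
  module

lemma qpoly_two_eq (s : BlockArray 2 2 t) (x : ℝ) :
    qpoly (Bmat (Plot 2 2)) s x =
      2 - (zd1 s + zd2 s) + (4 - z1 s + 2 * (zd1 s + zd2 s)) * (x - 1 / 2) ^ 2 := by
  rw [qpoly_eq_trace_coincidence Bmat_isSymm Bmat_mulVec_one Mmat_two_mulVec_one,
    sandwich_Bmat_two]
  simp only [add_mul, one_mul, smul_mul_assoc, trace_add, trace_smul, smul_eq_mul,
    trace_coincidence, trace_Mmat_mul_coincidence, trace_Jmat_two_mul_coincidence]
  push_cast
  ring

lemma isCorner_two (q : Plot 2 2) : IsCorner q := by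
  unfold IsCorner
  omega

lemma strictSignificant_two {s : BlockArray 2 2 t} {k : Fin t} (hk : Significant s k) :
    StrictSignificant s k := by
  obtain ⟨u, v, huv, hfiber, hadj, -⟩ := hk
  exact ⟨u, v, huv, hfiber, hadj, isCorner_two u, isCorner_two v⟩

end TwoByTwo

section AdjacentTies

/-- Any two distinct plots with the same treatment are neighbors. -/
def TiesAdjacent (s : BlockArray a b t) : Prop :=
  ∀ ⦃q r : Plot a b⦄, q ≠ r → s q = s r → Neighbor q r

lemma tiesAdjacent_of_f0_le_one {s : BlockArray a b t}
    (hs : ∀ k, ¬ Significant s k → f0 s k ≤ 1) : TiesAdjacent s := by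
  intro q r hqr htie
  by_cases hsig : Significant s (s q)
  · obtain ⟨u, v, -, hfiber, hadj, -⟩ := hsig
    have hq : q = u ∨ q = v := hfiber.subset rfl
    have hr : r = u ∨ r = v := hfiber.subset htie.symm
    rcases hq with rfl | rfl <;> rcases hr with rfl | rfl
    exacts [absurd rfl hqr, hadj, hadj.symm, absurd rfl hqr]
  · have hle := hs _ hsig
    rw [f0, Set.ncard_le_one] at hle
    exact absurd (hle q rfl r htie.symm) hqr

lemma Neighbor.not_triangle {u v w : Plot a b} (huv : Neighbor u v) (huw : Neighbor u w) :
    ¬ Neighbor v w := by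
  unfold Neighbor at *
  omega

lemma TiesAdjacent.fiber_eq_pair {s : BlockArray a b t} (hs : TiesAdjacent s) {u v : Plot a b}
    (huv : u ≠ v) (htie : s u = s v) : {q | s q = s u} = {u, v} := by
  refine Set.Subset.antisymm (fun w (hw : s w = s u) => ?_) ?_
  · by_contra hne
    simp only [Set.mem_insert_iff, Set.mem_singleton_iff, not_or] at hne
    exact (hs huv htie).not_triangle (hs (Ne.symm hne.1) hw.symm)
      (hs (Ne.symm hne.2) (htie.symm.trans hw.symm))
  · rintro w (rfl | rfl)
    exacts [rfl, htie.symm]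

lemma TiesAdjacent.f0_le_one {s : BlockArray a b t} (hs : TiesAdjacent s)
    (hcorner : ∀ q r : Plot a b, Neighbor q r → IsCorner q ∨ IsCorner r) {k : Fin t}
    (hk : ¬ Significant s k) : f0 s k ≤ 1 := by
  rw [f0, Set.ncard_le_one]
  rintro u rfl v hv
  by_contra huv
  have hadj := hs huv hv.symm
  exact hk ⟨u, v, huv, hs.fiber_eq_pair huv hv.symm, hadj, hcorner u v hadj⟩

lemma Significant.f0_eq_two {s : BlockArray a b t} {k : Fin t} (hk : Significant s k) :
    f0 s k = 2 := by
  obtain ⟨u, v, huv, hfiber, -⟩ := hk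
  rw [f0, hfiber, Set.ncard_pair huv]

lemma sum_f0 (s : BlockArray a b t) : ∑ k, f0 s k = a * b := by
  have fibers := Finset.card_eq_sum_card_fiberwise (f := s) (s := Finset.univ)
    (t := Finset.univ) (by simp)
  simpa [f0, Set.ncard_eq_toFinset_card'] using fibers.symm

lemma two_mul_ncard_significant_le (s : BlockArray a b t) :
    2 * {k | Significant s k}.ncard ≤ a * b := by
  classical
  rw [Set.ncard_eq_toFinset_card', mul_comm, ← smul_eq_mul, ← sum_f0 s]
  calc {k | Significant s k}.toFinset.card • 2
      ≤ ∑ k ∈ {k | Significant s k}.toFinset, f0 s k :=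
        Finset.card_nsmul_le_sum _ _ _ fun k hk => by
          rw [Significant.f0_eq_two (by simpa using hk)]
    _ ≤ ∑ k, f0 s k := Finset.sum_le_univ_sum_of_nonneg fun _ => Nat.zero_le _

lemma mem_Qset_union_iff_tiesAdjacent (s : BlockArray 2 2 t) :
    s ∈ Qset 2 2 t 0 ∪ QsetStar 2 2 t 1 ∪ QsetStar 2 2 t 2 ↔ TiesAdjacent s := by
  constructor
  · rintro ((hs | hs) | hs)
    exacts [tiesAdjacent_of_f0_le_one hs.2, tiesAdjacent_of_f0_le_one hs.1.2,
      tiesAdjacent_of_f0_le_one hs.1.2]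
  · intro hs
    have mem_Qset : s ∈ Qset 2 2 t {k | Significant s k}.ncard :=
      ⟨rfl, fun _ => hs.f0_le_one fun q _ _ => .inl (isCorner_two q)⟩
    have strict : ∀ k, Significant s k → StrictSignificant s k := fun _ => strictSignificant_two
    have count : {k | Significant s k}.ncard ≤ 2 := by
      have := two_mul_ncard_significant_le s
      omega
    interval_cases {k | Significant s k}.ncard
    exacts [.inl (.inl mem_Qset), .inl (.inr ⟨mem_Qset, strict⟩), .inr ⟨mem_Qset, strict⟩]

lemma neighbor_or_diagonal_two {q r : Plot 2 2} (hqr : q ≠ r) :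
    Neighbor q r ∨ UpperRightDiagonal q r ∨ UpperRightDiagonal r q ∨
      LowerRightDiagonal q r ∨ LowerRightDiagonal r q := by
  revert q r
  decide

lemma tiesAdjacent_two_iff (s : BlockArray 2 2 t) :
    TiesAdjacent s ↔ zd1 s + zd2 s = 0 := by
  simp only [zd1, zd2, Nat.add_eq_zero_iff, Set.ncard_eq_zero (Set.toFinite _),
    Set.eq_empty_iff_forall_notMem, Set.mem_ofPred_eq, Prod.forall]
  constructor
  · intro hs
    constructor <;> intro i j k l ⟨hrow, hcol, htie⟩ <;>
    · have hadj := hs (fun h => by cases h; omega) htie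
      simp only [Neighbor] at hadj
      omega
  · intro ⟨hzd1, hzd2⟩ q r hqr htie
    rcases neighbor_or_diagonal_two hqr with hadj | h | h | h | h
    exacts [hadj,
      absurd ⟨h.1, h.2, htie⟩ (hzd1 _ _ _ _), absurd ⟨h.1, h.2, htie.symm⟩ (hzd1 _ _ _ _),
      absurd ⟨h.1, h.2, htie⟩ (hzd2 _ _ _ _), absurd ⟨h.1, h.2, htie.symm⟩ (hzd2 _ _ _ _)]

end AdjacentTies

lemma exists_z1_eq_two_and_zd_eq_zero (ht : 3 ≤ t) :
    ∃ s : BlockArray 2 2 t, z1 s = 2 ∧ zd1 s + zd2 s = 0 := by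
  let s : BlockArray 2 2 t := fun q => Fin.castLE ht (!![0, 0; 1, 2] q.1 q.2)
  have hzr1 : zr1 s = 1 := by
    simp only [zr1, s, Fin.castLE_inj, Set.ncard_eq_toFinset_card']
    decide
  have hzc1 : zc1 s = 0 := by
    simp only [zc1, s, Fin.castLE_inj, Set.ncard_eq_toFinset_card']
    decide
  have hzd : zd1 s + zd2 s = 0 := by
    simp only [zd1, zd2, s, Fin.castLE_inj, Set.ncard_eq_toFinset_card']
    decide
  exact ⟨s, by simp [z1, hzr1, hzc1], hzd⟩

theorem optimality_t_ge_p_a_eq_b_eq_two_general (t : ℕ) :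
    (∀ s : BlockArray 2 2 t,
       qpoly (Bmat (Plot 2 2)) s (1 / 2 : ℝ) ≤ 2 ∧
       (qpoly (Bmat (Plot 2 2)) s (1 / 2 : ℝ) = 2 ↔
         s ∈ Qset 2 2 t 0 ∪ QsetStar 2 2 t 1 ∪ QsetStar 2 2 t 2)) ∧
    (3 ≤ t → ∀ x : ℝ, x ≠ (1 / 2 : ℝ) → (2 : ℝ) < rfun t (Bmat (Plot 2 2)) x) := by
  refine ⟨fun s => ?_, fun ht x hx => ?_⟩
  · have value : qpoly (Bmat (Plot 2 2)) s (1 / 2) = 2 - ((zd1 s + zd2 s : ℕ) : ℝ) := by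
      simp [qpoly_two_eq]
    rw [value, mem_Qset_union_iff_tiesAdjacent, tiesAdjacent_two_iff, sub_eq_self, Nat.cast_eq_zero]
    exact ⟨sub_le_self _ (Nat.cast_nonneg _), Iff.rfl⟩
  · obtain ⟨s, hz1, hzd⟩ := exists_z1_eq_two_and_zd_eq_zero ht
    have bdd : BddAbove (Set.range fun s : BlockArray 2 2 t => qpoly (Bmat (Plot 2 2)) s x) :=
      (Set.finite_range _).bddAbove
    have hzd_real : (zd1 s + zd2 s : ℝ) = 0 := mod_cast hzd
    have hpos : 0 < (x - 1 / 2) ^ 2 := sq_pos_of_ne_zero (sub_ne_zero.2 hx)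
    calc (2 : ℝ) < 2 + 2 * (x - 1 / 2) ^ 2 := by linarith
      _ = qpoly (Bmat (Plot 2 2)) s x := by rw [qpoly_two_eq, hz1, hzd_real]; ring
      _ ≤ rfun t (Bmat (Plot 2 2)) x := le_csSup bdd ⟨s, rfl⟩

/-- Theorem `t=p`, case `a = b = 2`, `t ≥ 4`: `x* = 1/2`, `y* = 2` and
`Q = Q₀ ∪ Q₁* ∪ Q₂*`. -/
theorem optimality_t_ge_p_a_eq_b_eq_two
    (t : ℕ) (ht : 4 ≤ t) :
    (∀ s : BlockArray 2 2 t,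
       qpoly (Bmat (Plot 2 2)) s (1 / 2 : ℝ) ≤ 2 ∧
       (qpoly (Bmat (Plot 2 2)) s (1 / 2 : ℝ) = 2 ↔
         s ∈ Qset 2 2 t 0 ∪ QsetStar 2 2 t 1 ∪ QsetStar 2 2 t 2)) ∧
    (∀ x : ℝ, x ≠ (1 / 2 : ℝ) → (2 : ℝ) < rfun t (Bmat (Plot 2 2)) x) :=
  ⟨(optimality_t_ge_p_a_eq_b_eq_two_general t).1,
    (optimality_t_ge_p_a_eq_b_eq_two_general t).2 (by omega)⟩

end TwoDim
end
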